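/- Assume (Cl1), (Cl2) and (Cl3). Then: (1) for every T ∈ ℝ, the Radon–Nikodym derivative satisfies dω_T/dω = exp( ∫_0^T σ(φ^{-s}(·)) ds ) ω-almost everywhere; (2) consequently, for every T > 0, every t ∈ ℝ and every α ∈ ℝ, e^{-T‖σ‖_∞} · ∫_X e^{-α c^t} dω ≤ ∫_X e^{-α c^t} dω_T ≤ e^{T‖σ‖_∞} · ∫_X e^{-α c^t} dω, where ‖σ‖_∞ = sup_{x∈X} |σ(x)|. -/

import Mathlib

open MeasureTheory Filter Set intervalIntegral

/-- The cocycle `c^t = log (dω_t/dω) ∘ φ^t`, where `ω_t = (φ^t)_* ω`. -/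
noncomputable def flowCocycle {X : Type*} [MeasurableSpace X]
    (φ : ℝ → X → X) (ω : Measure X) (t : ℝ) (x : X) : ℝ :=
  Real.log (((Measure.map (φ t) ω).rnDeriv ω (φ t x)).toReal)

lemma map_withDensity_comp_aux {X : Type*} [MeasurableSpace X] (μ : Measure X) (e : X → X)
    (he : Measurable e) (h : X → ENNReal) (hh : Measurable h) :
    Measure.map e (μ.withDensity (fun x => h (e x))) = (Measure.map e μ).withDensity h := by
  ext s hs
  rw [Measure.map_apply he hs, withDensity_apply _ (he hs), withDensity_apply _ hs,
    setLIntegral_map hs hh he]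

/-- Under (Cl1)–(Cl3):
(1) `dω_T/dω = exp (∫_0^T σ(φ^{-s}·) ds)` `ω`-a.e.;
(2) consequently `e^{-T‖σ‖} 𝔉_{ω,t}(α) ≤ 𝔉_{ω_T,t}(α) ≤ e^{T‖σ‖} 𝔉_{ω,t}(α)`
for `T > 0`, `t ∈ ℝ`, `α ∈ ℝ`, where `𝔉_{ν,t}(α) = ∫ e^{-α c^t} dν`. -/
theorem rnDeriv_formula_and_mgf_bounds
    {X : Type*} [MetricSpace X] [CompactSpace X] [MeasurableSpace X] [BorelSpace X]
    (φ : ℝ → X → X)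
    (hcont : Continuous fun p : ℝ × X => φ p.1 p.2)
    (hzero : ∀ x, φ 0 x = x)
    (hgroup : ∀ t s : ℝ, ∀ x, φ (t + s) x = φ t (φ s x))
    (ω : Measure X) [IsProbabilityMeasure ω]
    (hCl1 : ∀ t : ℝ, ω ≪ Measure.map (φ t) ω ∧ Measure.map (φ t) ω ≪ ω)
    (C : ℝ → C(X, ℝ))
    (hCl2 : ∀ t : ℝ, flowCocycle φ ω t =ᵐ[ω] ⇑(C t))
    (σ : C(X, ℝ))
    (hCl3 : HasDerivAt C σ 0) :
    -- (1) explicit formula for the Radon–Nikodym derivative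
    (∀ T : ℝ,
      (Measure.map (φ T) ω).rnDeriv ω =ᵐ[ω]
        fun x => ENNReal.ofReal (Real.exp (∫ s in (0:ℝ)..T, σ (φ (-s) x)))) ∧
    -- (2) two-sided bounds on the moment generating function
    (∀ T : ℝ, 0 < T → ∀ t α : ℝ,
      Real.exp (-(T * ‖σ‖)) * ∫ x, Real.exp (-(α * flowCocycle φ ω t x)) ∂ω ≤
          ∫ x, Real.exp (-(α * flowCocycle φ ω t x)) ∂(Measure.map (φ T) ω) ∧
        ∫ x, Real.exp (-(α * flowCocycle φ ω t x)) ∂(Measure.map (φ T) ω) ≤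
          Real.exp (T * ‖σ‖) * ∫ x, Real.exp (-(α * flowCocycle φ ω t x)) ∂ω) := by
  have hφc : ∀ t, Continuous (φ t) := fun t =>
    hcont.comp (continuous_const.prodMk continuous_id)
  have hφm : ∀ t, Measurable (φ t) := fun t => (hφc t).measurable
  have hinv : ∀ t x, φ (-t) (φ t x) = x := fun t x => by
    rw [← hgroup, neg_add_cancel, hzero]
  have hinv' : ∀ t x, φ t (φ (-t) x) = x := fun t x => by
    rw [← hgroup, add_neg_cancel, hzero]
  have hprob : ∀ t, IsProbabilityMeasure (Measure.map (φ t) ω) := fun t =>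
    Measure.isProbabilityMeasure_map (hφm t).aemeasurable
  -- transport of a.e. statements
  have htrans : ∀ (t : ℝ) (p : X → Prop), (∀ᵐ x ∂ω, p x) → ∀ᵐ x ∂ω, p (φ t x) := by
    intro t p hp
    exact ae_of_ae_map (hφm t).aemeasurable ((hCl1 t).2.ae_le hp)
  -- step A
  have hA : ∀ t, (Measure.map (φ t) ω).rnDeriv ω =ᵐ[ω]
      fun y => ENNReal.ofReal (Real.exp (C t (φ (-t) y))) := by
    intro t
    have h1 : ∀ᵐ y ∂ω, 0 < (Measure.map (φ t) ω).rnDeriv ω y :=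
      (hCl1 t).1.ae_le (Measure.rnDeriv_pos (hCl1 t).2)
    have h2 := Measure.rnDeriv_lt_top (Measure.map (φ t) ω) ω
    have h3 := htrans (-t) _ (hCl2 t)
    filter_upwards [h1, h2, h3] with y h1 h2 h3
    rw [← h3, flowCocycle, hinv', Real.exp_log (ENNReal.toReal_pos h1.ne' h2.ne),
      ENNReal.ofReal_toReal h2.ne]
  have hGm : ∀ t, Measurable fun y => ENNReal.ofReal (Real.exp (C t (φ (-t) y))) := fun t =>
    (Real.continuous_exp.comp ((C t).continuous.comp (hφc (-t)))).measurable.ennreal_ofReal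
  have hA' : ∀ t, Measure.map (φ t) ω =
      ω.withDensity fun y => ENNReal.ofReal (Real.exp (C t (φ (-t) y))) := by
    intro t
    rw [← withDensity_congr_ae (hA t), Measure.withDensity_rnDeriv_eq _ _ (hCl1 t).2]
  -- step B: cocycle
  have hB : ∀ t s, ∀ᵐ x ∂ω, C (t + s) x = C t (φ s x) + C s x := by
    intro t s
    have e1 : Measure.map (φ (t + s)) ω = Measure.map (φ t) (Measure.map (φ s) ω) := by
      rw [Measure.map_map (hφm t) (hφm s)]
      congr 1
      ext x
      exact hgroup t s x
    have e2 := map_withDensity_comp_aux ω (φ t) (hφm t)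
      (fun y => ENNReal.ofReal (Real.exp (C s (φ (-s) (φ (-t) y))))) ((hGm s).comp (hφm (-t)))
    simp only [hinv] at e2
    have hm2 : Measurable fun y => ENNReal.ofReal (Real.exp (C s (φ (-s) (φ (-t) y)))) :=
      (hGm s).comp (hφm (-t))
    rw [hA' (t + s), hA' s, e2, hA' t, ← withDensity_mul _ (hGm t) hm2,
      withDensity_eq_iff_of_sigmaFinite (hGm _).aemeasurable
        ((hGm t).mul hm2).aemeasurable] at e1
    have e3 := htrans (t + s) _ e1
    filter_upwards [e3] with x hx
    simp only [Pi.mul_apply] at hx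
    rw [hinv, hgroup, hinv, hinv, ← ENNReal.ofReal_mul (Real.exp_pos _).le, ← Real.exp_add,
      ENNReal.ofReal_eq_ofReal_iff (Real.exp_pos _).le (Real.exp_pos _).le,
      Real.exp_eq_exp] at hx
    exact hx
  have hB' : ∀ x ∈ ω.support, ∀ t s, C (t + s) x = C t (φ s x) + C s x := by
    intro x hx t s
    exact Measure.support_subset_of_isClosed (isClosed_eq (C (t + s)).continuous
      (((C t).continuous.comp (hφc s)).add (C s).continuous)) (hB t s) hx
  have hder0 : ∀ y, HasDerivAt (fun t => C t y) (σ y) 0 := fun y =>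
    (ContinuousMap.evalCLM ℝ y : C(X, ℝ) →L[ℝ] ℝ).hasFDerivAt.comp_hasDerivAt (0:ℝ) hCl3
  have hD : ∀ x ∈ ω.support, ∀ T, C T x = ∫ s in (0:ℝ)..T, σ (φ s x) := by
    intro x hx T
    have hd : ∀ t ∈ uIcc 0 T, HasDerivAt (fun t => C t x) (σ (φ t x)) t := by
      intro t _
      have h1 : HasDerivAt (fun u => C u (φ t x)) (σ (φ t x)) (t - t) := by
        rw [sub_self]; exact hder0 _
      have h2 := (h1.comp_sub_const t t).add_const (C t x)
      refine h2.congr_of_eventuallyEq (Eventually.of_forall fun u => ?_)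
      have := hB' x hx (u - t) t
      simpa using this
    have hc : Continuous fun s => σ (φ s x) :=
      σ.continuous.comp (hcont.comp (continuous_id.prodMk continuous_const))
    rw [intervalIntegral.integral_eq_sub_of_hasDerivAt hd (hc.intervalIntegrable _ _)]
    have h0 := hB' x hx 0 0
    rw [hzero, add_zero] at h0
    linarith
  have h1 : ∀ T : ℝ, (Measure.map (φ T) ω).rnDeriv ω =ᵐ[ω]
        fun x => ENNReal.ofReal (Real.exp (∫ s in (0:ℝ)..T, σ (φ (-s) x))) := by
    intro T
    have hs : ∀ᵐ x ∂ω, x ∈ ω.support := Measure.support_mem_ae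
    filter_upwards [hA T, htrans (-T) _ hs] with y hy hys
    rw [hy, hD _ hys T]
    have : ∀ s, σ (φ s (φ (-T) y)) = (fun u => σ (φ (-u) y)) (T - s) := by
      intro s
      simp only [← hgroup]
      congr 2
      ring
    simp_rw [this]
    rw [intervalIntegral.integral_comp_sub_left (fun u => σ (φ (-u) y)) T]
    simp
  refine ⟨h1, fun T hT t α => ?_⟩
  have hint : Integrable (fun x => Real.exp (-(α * flowCocycle φ ω t x))) ω := by
    have hc : Continuous fun x => Real.exp (-(α * C t x)) := by fun_prop
    refine (hc.integrable_of_hasCompactSupport (HasCompactSupport.of_compactSpace _)).congr ?_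
    filter_upwards [hCl2 t] with x hx
    rw [hx]
  have hbd : ∀ x, |∫ s in (0:ℝ)..T, σ (φ (-s) x)| ≤ T * ‖σ‖ := by
    intro x
    have := intervalIntegral.norm_integral_le_of_norm_le_const (a := 0) (b := T) (C := ‖σ‖)
      (f := fun s => σ (φ (-s) x)) (fun s _ => σ.norm_coe_le_norm _)
    rw [sub_zero, abs_of_pos hT, Real.norm_eq_abs] at this
    linarith
  have hlow : ∀ᵐ x ∂ω, Real.exp (-(T * ‖σ‖)) ≤ ((Measure.map (φ T) ω).rnDeriv ω x).toReal := by
    filter_upwards [h1 T] with x hx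
    rw [hx, ENNReal.toReal_ofReal (Real.exp_pos _).le]
    exact Real.exp_le_exp.2 (abs_le.1 (hbd x)).1
  have hup : ∀ᵐ x ∂ω, ((Measure.map (φ T) ω).rnDeriv ω x).toReal ≤ Real.exp (T * ‖σ‖) := by
    filter_upwards [h1 T] with x hx
    rw [hx, ENNReal.toReal_ofReal (Real.exp_pos _).le]
    exact Real.exp_le_exp.2 (abs_le.1 (hbd x)).2
  have hint2 : Integrable (fun x => ((Measure.map (φ T) ω).rnDeriv ω x).toReal •
      Real.exp (-(α * flowCocycle φ ω t x))) ω := by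
    refine hint.bdd_mul (c := Real.exp (T * ‖σ‖))
      (Measure.measurable_rnDeriv _ _).ennreal_toReal.aestronglyMeasurable ?_
    filter_upwards [hup] with x hx
    rwa [Real.norm_of_nonneg ENNReal.toReal_nonneg]
  rw [← integral_rnDeriv_smul (hCl1 T).2, ← MeasureTheory.integral_const_mul,
    ← MeasureTheory.integral_const_mul]
  constructor
  · refine integral_mono_ae (hint.const_mul _) hint2 ?_
    filter_upwards [hlow] with x hx
    exact mul_le_mul_of_nonneg_right hx (Real.exp_pos _).le
  · refine integral_mono_ae hint2 (hint.const_mul _) ?_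
    filter_upwards [hup] with x hx
    exact mul_le_mul_of_nonneg_right hx (Real.exp_pos _).le
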